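/- Fix an integer n ≥ 1 and real numbers α ≥ 0, γ > 0, Q₁₁ ≥ 0, Q₂₂ ≥ 0, and Q₁₂ ∈ ℝ. Define P₁₂ = (−1 + √(1 + γ²Q₁₁/(n²π²)))/γ², P₂₂ = (−α + √(α² + n²π²γ²(Q₂₂ + 2P₁₂)))/(n²π²γ²), and P₁₁ = αP₁₂ + n²π²(1 + γ²P₁₂)P₂₂ − Q₁₂. Then P₁₂ ≥ 0, P₂₂ ≥ 0, and these values satisfy the coupled algebraic Riccati equations: 0 = −2n²π²P₁₂ + Q₁₁ − n²π²γ²P₁₂², 0 = P₁₁ − αP₁₂ − n²π²P₂₂ + Q₁₂ − n²π²γ²P₁₂P₂₂, and 0 = 2P₁₂ − 2αP₂₂ + Q₂₂ − n²π²γ²P₂₂². -/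

import Mathlib

/-!
The modal Riccati system is triangular: the first equation involves only `P₁₂`, the third then
determines `P₂₂`, and the second is linear in `P₁₁`. After division of the first equation by
`n²π²`, the two quadratic equations are instances of `c p² + 2 a p = q` with `c > 0` and `q ≥ 0`,
whose larger root is nonnegative.
-/

/-- The larger root, for `c > 0`, of the scalar Riccati equation `c p² + 2 a p = q`. The factor `2`
on the linear coefficient is built in, so that `a² + c q` is a quarter of the discriminant. -/
noncomputable def riccatiRoot (c a q : ℝ) : ℝ :=
  (-a + √(a ^ 2 + c * q)) / c

theorem riccatiRoot_nonneg {c q : ℝ} (hc : 0 ≤ c) (a : ℝ) (hq : 0 ≤ q) :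
    0 ≤ riccatiRoot c a q := by
  have ha : a ≤ √(a ^ 2 + c * q) :=
    Real.le_sqrt_of_sq_le (le_add_of_nonneg_right (mul_nonneg hc hq))
  exact div_nonneg (by linarith) hc

theorem riccatiRoot_eq {c a q : ℝ} (hc : c ≠ 0) (hdisc : 0 ≤ a ^ 2 + c * q) :
    c * riccatiRoot c a q ^ 2 + 2 * a * riccatiRoot c a q = q := by
  have hsq := Real.sq_sqrt hdisc
  rw [riccatiRoot]
  field_simp
  linear_combination hsq

/-- `κ` stands for the eigenvalue `n²π²` of `-d²/dx²` on the `n`-th mode. -/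
theorem dirichlet_modal_riccati_solution_general {κ α γ Q11 Q12 Q22 P12 P22 P11 : ℝ}
    (hκ : 0 < κ) (hγ : γ ≠ 0) (hQ11 : 0 ≤ Q11) (hQ22 : 0 ≤ Q22)
    (hP12 : P12 = (-1 + √(1 + γ ^ 2 * Q11 / κ)) / γ ^ 2)
    (hP22 : P22 = (-α + √(α ^ 2 + κ * γ ^ 2 * (Q22 + 2 * P12))) / (κ * γ ^ 2))
    (hP11 : P11 = α * P12 + κ * (1 + γ ^ 2 * P12) * P22 - Q12) :
    0 ≤ P12 ∧ 0 ≤ P22 ∧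
    0 = -2 * κ * P12 + Q11 - κ * γ ^ 2 * P12 ^ 2 ∧
    0 = P11 - α * P12 - κ * P22 + Q12 - κ * γ ^ 2 * P12 * P22 ∧
    0 = 2 * P12 - 2 * α * P22 + Q22 - κ * γ ^ 2 * P22 ^ 2 := by
  have hP12_root : P12 = riccatiRoot (γ ^ 2) 1 (Q11 / κ) := by
    rw [hP12, riccatiRoot, one_pow, mul_div_assoc]
  have hP22_root : P22 = riccatiRoot (κ * γ ^ 2) α (Q22 + 2 * P12) := hP22
  have hP12_nonneg : 0 ≤ P12 := hP12_root ▸ riccatiRoot_nonneg (by positivity) 1 (by positivity)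
  have hP22_nonneg : 0 ≤ P22 := hP22_root ▸ riccatiRoot_nonneg (by positivity) α (by positivity)
  have hP12_eq : γ ^ 2 * P12 ^ 2 + 2 * 1 * P12 = Q11 / κ :=
    hP12_root ▸ riccatiRoot_eq (by positivity) (by positivity)
  have hP22_eq : κ * γ ^ 2 * P22 ^ 2 + 2 * α * P22 = Q22 + 2 * P12 :=
    hP22_root ▸ riccatiRoot_eq (by positivity) (by positivity)
  rw [eq_div_iff hκ.ne'] at hP12_eq
  refine ⟨hP12_nonneg, hP22_nonneg, ?_, ?_, ?_⟩
  · linear_combination hP12_eq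
  · linear_combination -hP11
  · linear_combination hP22_eq

/-- The explicit formulas for `P₁₂`, `P₂₂`, `P₁₁` give a nonnegative
solution of the `n`-th decoupled algebraic Riccati equations for Dirichlet
boundary LQR control of the damped wave equation. -/
theorem dirichlet_modal_riccati_solution
    (n : ℕ) (hn : 1 ≤ n) (α γ Q11 Q12 Q22 : ℝ)
    (hα : 0 ≤ α) (hγ : 0 < γ) (hQ11 : 0 ≤ Q11) (hQ22 : 0 ≤ Q22)
    (P12 P22 P11 : ℝ)
    (hP12 : P12 = (-1 + Real.sqrt (1 + γ ^ 2 * Q11 / ((n : ℝ) ^ 2 * Real.pi ^ 2))) / γ ^ 2)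
    (hP22 : P22 = (-α + Real.sqrt (α ^ 2 + (n : ℝ) ^ 2 * Real.pi ^ 2 * γ ^ 2 * (Q22 + 2 * P12))) /
        ((n : ℝ) ^ 2 * Real.pi ^ 2 * γ ^ 2))
    (hP11 : P11 = α * P12 + (n : ℝ) ^ 2 * Real.pi ^ 2 * (1 + γ ^ 2 * P12) * P22 - Q12) :
    0 ≤ P12 ∧ 0 ≤ P22 ∧
    0 = -2 * (n : ℝ) ^ 2 * Real.pi ^ 2 * P12 + Q11 - (n : ℝ) ^ 2 * Real.pi ^ 2 * γ ^ 2 * P12 ^ 2 ∧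
    0 = P11 - α * P12 - (n : ℝ) ^ 2 * Real.pi ^ 2 * P22 + Q12
        - (n : ℝ) ^ 2 * Real.pi ^ 2 * γ ^ 2 * P12 * P22 ∧
    0 = 2 * P12 - 2 * α * P22 + Q22 - (n : ℝ) ^ 2 * Real.pi ^ 2 * γ ^ 2 * P22 ^ 2 := by
  have hκ : 0 < (n : ℝ) ^ 2 * Real.pi ^ 2 := by positivity
  simpa only [mul_assoc] using
    dirichlet_modal_riccati_solution_general hκ hγ.ne' hQ11 hQ22 hP12 hP22 hP11
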